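/- Let σ₀ be the alternating trilinear form on Sym³W₃ (W₃ three-dimensional with basis x,y,z) determined by σ₀(u³,v³,w³) = det(u,v,w)³. For monomials m_r = x^{i_r} y^{j_r} z^{k_r} (r = 1,2,3) of degree 3, one has σ₀(m₁, m₂, m₃) ≠ 0 if and only if i₁+i₂+i₃ = j₁+j₂+j₃ = k₁+k₂+k₃ = 3 and not all three monomials equal xyz. -/

import Mathlib

open MvPolynomial

/-- The cube `w³` of a vector `w ∈ W₃`, as a polynomial (element of `Sym³W₃`). -/
noncomputable def cubePoly (w : Fin 3 → ℂ) : MvPolynomial (Fin 3) ℂ :=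
  (∑ i, C (w i) * X i) ^ 3

/-- The monomial `x^{v 0} y^{v 1} z^{v 2}` of `Sym³W₃` (for `v 0 + v 1 + v 2 = 3`). -/
noncomputable def monPoly (v : Fin 3 → ℕ) : MvPolynomial (Fin 3) ℂ :=
  X 0 ^ v 0 * X 1 ^ v 1 * X 2 ^ v 2

namespace Triv

noncomputable def lin (w : Fin 3 → ℂ) : MvPolynomial (Fin 3) ℂ := ∑ i, C (w i) * X i

/-- the six permutations of three letters -/
def p : Fin 6 → Fin 3 → Fin 3 :=
  ![![0, 1, 2], ![1, 2, 0], ![2, 0, 1], ![0, 2, 1], ![2, 1, 0], ![1, 0, 2]]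

theorem lin_add (u v : Fin 3 → ℂ) : lin (u + v) = lin u + lin v := by
  simp [lin, add_mul, Finset.sum_add_distrib]

theorem polar (a b c : Fin 3 → ℂ) : lin a * lin b * lin c =
    (1/6 : ℂ) • (cubePoly (a + b + c) - cubePoly (a + b) - cubePoly (b + c) - cubePoly (a + c)
      + cubePoly a + cubePoly b + cubePoly c) := by
  have h : ∀ w, cubePoly w = lin w ^ 3 := fun w => rfl
  have h6 : (6 : ℂ) • (lin a * lin b * lin c) = (cubePoly (a + b + c) - cubePoly (a + b)
      - cubePoly (b + c) - cubePoly (a + c) + cubePoly a + cubePoly b + cubePoly c) := by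
    simp only [h, lin_add, MvPolynomial.smul_eq_C_mul, map_ofNat]
    ring
  rw [← h6, smul_smul]
  norm_num

theorem key {ι : Type} [Fintype ι] (φ : MvPolynomial (Fin 3) ℂ →ₗ[ℂ] ℂ) (k : ℂ)
    (D : ι → Fin 3 → (Fin 3 → ℂ) → ℂ)
    (hD : ∀ s i u v, D s i (u + v) = D s i u + D s i v)
    (hφ : ∀ w, φ (cubePoly w) = k * ∑ s, D s 0 w * D s 1 w * D s 2 w)
    (a : Fin 3 → Fin 3 → ℂ) :
    φ (lin (a 0) * lin (a 1) * lin (a 2)) =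
      k * (1/6) * ∑ s, ∑ t, D s 0 (a (p t 0)) * D s 1 (a (p t 1)) * D s 2 (a (p t 2)) := by
  rw [polar]
  simp only [map_smul, map_add, map_sub, hφ, smul_eq_mul, ← mul_add, ← mul_sub,
    ← Finset.sum_add_distrib, ← Finset.sum_sub_distrib]
  rw [mul_comm k (1/6), mul_assoc]
  congr 2
  refine Finset.sum_congr rfl fun s _ => ?_
  simp [Fin.sum_univ_six, p, hD]
  ring

def d {R : Type} [CommRing R] (u v w : Fin 3 → R) : R :=
  u 0 * (v 1 * w 2 - v 2 * w 1) - u 1 * (v 0 * w 2 - v 2 * w 0) + u 2 * (v 0 * w 1 - v 1 * w 0)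

theorem d_det (u v w : Fin 3 → ℂ) : Matrix.det (Matrix.of ![u, v, w]) = d u v w := by
  simp [Matrix.det_fin_three, d]; ring

def eps : Fin 3 → Fin 3 → Fin 3 → ℤ :=
  ![![![0, 0, 0], ![0, 0, 1], ![0, -1, 0]],
    ![![0, 0, -1], ![0, 0, 0], ![1, 0, 0]],
    ![![0, 1, 0], ![-1, 0, 0], ![0, 0, 0]]]

theorem d_eps (a b c : Fin 3) :
    d (Pi.single a (1 : ℂ)) (Pi.single b 1) (Pi.single c 1) = (eps a b c : ℂ) := by
  fin_cases a <;> fin_cases b <;> fin_cases c <;> simp [d, eps]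

theorem lin_single (a : Fin 3) : lin (Pi.single a 1) = X a := by
  fin_cases a <;> simp [lin, Fin.sum_univ_three]

section
theorem lev1 (σ : MvPolynomial (Fin 3) ℂ [⋀^Fin 3]→ₗ[ℂ] ℂ)
    (hσ : ∀ u v w : Fin 3 → ℂ,
      σ ![cubePoly u, cubePoly v, cubePoly w] = (Matrix.det (Matrix.of ![u, v, w])) ^ 3)
    (u v : Fin 3 → ℂ) (n : Fin 3 → Fin 3 → ℂ) :
    σ ![cubePoly u, cubePoly v, lin (n 0) * lin (n 1) * lin (n 2)] =
      d u v (n 0) * d u v (n 1) * d u v (n 2) := by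
  have e : ∀ x, (σ.toMultilinearMap.toLinearMap ![cubePoly u, cubePoly v, 0] 2) x
      = σ ![cubePoly u, cubePoly v, x] := by
    intro x
    simp only [MultilinearMap.toLinearMap_apply, AlternatingMap.coe_multilinearMap]
    congr 1
    ext i; fin_cases i <;> rfl
  rw [← e, key (ι := Unit) _ 1 (fun _ _ w => d u v w)]
  · simp [Fin.sum_univ_six, p]; ring
  · intros; simp [d]; ring
  · intro w; rw [e, hσ, d_det]; simp; ring

theorem lev2 (σ : MvPolynomial (Fin 3) ℂ [⋀^Fin 3]→ₗ[ℂ] ℂ)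
    (hσ : ∀ u v w : Fin 3 → ℂ,
      σ ![cubePoly u, cubePoly v, cubePoly w] = (Matrix.det (Matrix.of ![u, v, w])) ^ 3)
    (u : Fin 3 → ℂ) (m n : Fin 3 → Fin 3 → ℂ) :
    σ ![cubePoly u, lin (m 0) * lin (m 1) * lin (m 2), lin (n 0) * lin (n 1) * lin (n 2)] =
      (1/6) * ∑ t, d u (m (p t 0)) (n 0) * d u (m (p t 1)) (n 1) * d u (m (p t 2)) (n 2) := by
  set N := lin (n 0) * lin (n 1) * lin (n 2) with hN
  have e : ∀ x, (σ.toMultilinearMap.toLinearMap ![cubePoly u, 0, N] 1) x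
      = σ ![cubePoly u, x, N] := by
    intro x
    simp only [MultilinearMap.toLinearMap_apply, AlternatingMap.coe_multilinearMap]
    congr 1
    ext i; fin_cases i <;> rfl
  rw [← e, key (ι := Unit) _ 1 (fun _ i w => d u w (n i))]
  · simp
  · intros; simp [d]; ring
  · intro w; rw [e, hN, lev1 σ hσ]; simp

theorem lev3 (σ : MvPolynomial (Fin 3) ℂ [⋀^Fin 3]→ₗ[ℂ] ℂ)
    (hσ : ∀ u v w : Fin 3 → ℂ,
      σ ![cubePoly u, cubePoly v, cubePoly w] = (Matrix.det (Matrix.of ![u, v, w])) ^ 3)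
    (l m n : Fin 3 → Fin 3 → ℂ) :
    σ ![lin (l 0) * lin (l 1) * lin (l 2), lin (m 0) * lin (m 1) * lin (m 2),
      lin (n 0) * lin (n 1) * lin (n 2)] =
      (1/6) * (1/6) * ∑ t, ∑ s, d (l (p s 0)) (m (p t 0)) (n 0) *
        d (l (p s 1)) (m (p t 1)) (n 1) * d (l (p s 2)) (m (p t 2)) (n 2) := by
  set N := lin (n 0) * lin (n 1) * lin (n 2) with hN
  set M := lin (m 0) * lin (m 1) * lin (m 2) with hM
  have e : ∀ x, (σ.toMultilinearMap.toLinearMap ![0, M, N] 0) x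
      = σ ![x, M, N] := by
    intro x
    simp only [MultilinearMap.toLinearMap_apply, AlternatingMap.coe_multilinearMap]
    congr 1
    ext i; fin_cases i <;> rfl
  rw [← e, key _ (1/6) (fun t i w => d w (m (p t i)) (n i))]
  · intros; simp [d]; ring
  · intro w; rw [e, hN, hM, lev2 σ hσ]

/-- integer value -/
def Nval (f g h : Fin 3 → Fin 3) : ℤ :=
  ∑ t, ∑ s, eps (f (p s 0)) (g (p t 0)) (h 0) *
        eps (f (p s 1)) (g (p t 1)) (h 1) * eps (f (p s 2)) (g (p t 2)) (h 2)

theorem lev4 (σ : MvPolynomial (Fin 3) ℂ [⋀^Fin 3]→ₗ[ℂ] ℂ)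
    (hσ : ∀ u v w : Fin 3 → ℂ,
      σ ![cubePoly u, cubePoly v, cubePoly w] = (Matrix.det (Matrix.of ![u, v, w])) ^ 3)
    (f g h : Fin 3 → Fin 3) :
    σ ![X (f 0) * X (f 1) * X (f 2), X (g 0) * X (g 1) * X (g 2), X (h 0) * X (h 1) * X (h 2)] =
      (1/36) * (Nval f g h : ℂ) := by
  have := lev3 σ hσ (fun i => Pi.single (f i) 1) (fun i => Pi.single (g i) 1)
    (fun i => Pi.single (h i) 1)
  simp only [lin_single, d_eps] at this
  rw [this, Nval]
  push_cast
  norm_num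
end

def F : Fin 10 → Fin 3 → Fin 3 :=
  ![![0, 0, 0], ![0, 0, 1], ![0, 0, 2], ![0, 1, 1], ![0, 1, 2], ![0, 2, 2],
    ![1, 1, 1], ![1, 1, 2], ![1, 2, 2], ![2, 2, 2]]

def G : Fin 10 → Fin 3 → ℕ :=
  ![![3, 0, 0], ![2, 1, 0], ![2, 0, 1], ![1, 2, 0], ![1, 1, 1], ![1, 0, 2],
    ![0, 3, 0], ![0, 2, 1], ![0, 1, 2], ![0, 0, 3]]

theorem mon_G (k : Fin 10) : monPoly (G k) = X (F k 0) * X (F k 1) * X (F k 2) := by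
  fin_cases k <;> simp [monPoly, G, F] <;> ring

theorem ex_G (v : Fin 3 → ℕ) (h : v 0 + v 1 + v 2 = 3) : ∃ k, v = G k := by
  have key : ∀ a b c : Fin 4, a.val + b.val + c.val = 3 →
      ∃ k, G k 0 = a.val ∧ G k 1 = b.val ∧ G k 2 = c.val := by decide
  obtain ⟨k, h0, h1, h2⟩ := key ⟨v 0, by omega⟩ ⟨v 1, by omega⟩ ⟨v 2, by omega⟩ h
  refine ⟨k, ?_⟩
  ext i; fin_cases i
  · exact h0.symm
  · exact h1.symm
  · exact h2.symm

set_option maxRecDepth 100000 in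
theorem final : ∀ a b c : Fin 10, Nval (F a) (F b) (F c) ≠ 0 ↔
    (∀ j, G a j + G b j + G c j = 3) ∧ ¬ (a = 4 ∧ b = 4 ∧ c = 4) := by
  decide +kernel

theorem G_inj : ∀ a : Fin 10, G a = ![1, 1, 1] ↔ a = 4 := by decide

end Triv

/-- Let `σ₀` be the alternating trilinear form on `Sym³W₃` determined by
`σ₀(u³, v³, w³) = det(u,v,w)³`. For degree-3 monomials `m_r = x^{i_r} y^{j_r} z^{k_r}`
(`r = 1, 2, 3`), one has `σ₀(m₁, m₂, m₃) ≠ 0` iff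
`i₁+i₂+i₃ = j₁+j₂+j₃ = k₁+k₂+k₃ = 3` and not all three monomials equal `xyz`. -/
theorem trivector_nonzero_on_monomials
    (σ : MvPolynomial (Fin 3) ℂ [⋀^Fin 3]→ₗ[ℂ] ℂ)
    (hσ : ∀ u v w : Fin 3 → ℂ,
      σ ![cubePoly u, cubePoly v, cubePoly w] = (Matrix.det (Matrix.of ![u, v, w])) ^ 3)
    (E : Fin 3 → Fin 3 → ℕ) (hdeg : ∀ r, E r 0 + E r 1 + E r 2 = 3) :
    σ (fun r => monPoly (E r)) ≠ 0 ↔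
      (∀ j, E 0 j + E 1 j + E 2 j = 3) ∧ ¬ (∀ r, E r = ![1, 1, 1]) := by
  obtain ⟨a, ha⟩ := Triv.ex_G (E 0) (hdeg 0)
  obtain ⟨b, hb⟩ := Triv.ex_G (E 1) (hdeg 1)
  obtain ⟨c, hc⟩ := Triv.ex_G (E 2) (hdeg 2)
  have h1 : (fun r => monPoly (E r)) = ![monPoly (E 0), monPoly (E 1), monPoly (E 2)] := by
    funext i; fin_cases i <;> rfl
  rw [h1, Fin.forall_fin_succ (P := fun r => E r = ![1, 1, 1]), Fin.forall_fin_two]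
  change _ ↔ _ ∧ ¬ (E 0 = ![1, 1, 1] ∧ E 1 = ![1, 1, 1] ∧ E 2 = ![1, 1, 1])
  rw [ha, hb, hc, Triv.mon_G, Triv.mon_G, Triv.mon_G, Triv.lev4 σ hσ, Triv.G_inj, Triv.G_inj,
    Triv.G_inj, ← Triv.final]
  simp
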